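/- For positive definite matrices A and B, Tr[A(log A - log B)] = ∫₁^∞ ( (1/γ) Tr[(A - γB)₊] + (1/γ²) Tr[(B - γA)₊] ) dγ + Tr[A - B] (Frenkel's integral formula, in hockey-stick form). -/

import Mathlib

open MeasureTheory Matrix
open scoped ComplexOrder
noncomputable section

/-- The positive part `(X)₊` of a Hermitian matrix, via continuous functional calculus. -/
def mposPart {n : ℕ} (X : Matrix (Fin n) (Fin n) ℂ) : Matrix (Fin n) (Fin n) ℂ :=
  cfc (fun x : ℝ => max x 0) X

/-- The spectral projection of a Hermitian matrix onto its strictly positive part,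
so that `projPos (A - γ • B)` is the projection `{A > γB}`. -/
def projPos {n : ℕ} (X : Matrix (Fin n) (Fin n) ℂ) : Matrix (Fin n) (Fin n) ℂ :=
  cfc (fun x : ℝ => if 0 < x then (1:ℝ) else 0) X

/-- The spectral projection of a Hermitian matrix onto its nonnegative part,
so that `projNonneg (γ • B - A)` is the projection `{A ≤ γB}`. -/
def projNonneg {n : ℕ} (X : Matrix (Fin n) (Fin n) ℂ) : Matrix (Fin n) (Fin n) ℂ :=
  cfc (fun x : ℝ => if 0 ≤ x then (1:ℝ) else 0) X

/-- Matrix logarithm via functional calculus. -/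
def mlog {n : ℕ} (X : Matrix (Fin n) (Fin n) ℂ) : Matrix (Fin n) (Fin n) ℂ :=
  cfc Real.log X

/-- Real matrix power via functional calculus (`Real.rpow`, so negative powers of
positive semidefinite matrices are taken on the support). -/
def mpow {n : ℕ} (X : Matrix (Fin n) (Fin n) ℂ) (a : ℝ) : Matrix (Fin n) (Fin n) ℂ :=
  cfc (fun x : ℝ => x ^ a) X

/-!
For `c, t > 0` let `N(B; c, t)` be the number of positive eigenvalues of the pencil
`A - t(B + c)`. Integrating over `c` counts the eigenvalues of `A - tB` above `tc` and gives
`t⁻¹ Tr (A - tB)₊`. Integrating over `t` counts the eigenvalues of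
`(B + c)^(-1/2) A (B + c)^(-1/2)` above `t`, by Sylvester's law of inertia, and gives
`Tr A (B + c)⁻¹`. Both integrals diverge over the quadrant, but by Fubini the difference
`N(B; c, t) - N(C; c, t)` yields
`∫₀^∞ t⁻¹ (Tr (A - tB)₊ - Tr (A - tC)₊) dt = ∫₀^∞ Tr A ((B + c)⁻¹ - (C + c)⁻¹) dc
  = Tr A (log C - log B)`:
for `B ≤ C` the integrand is nonnegative, and two arbitrary `B`, `C` are compared through `B + C`.
Take `C = A` and substitute `t = γ⁻¹` on `(0, 1)`.
-/

section

open scoped MatrixOrder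

variable {ι κ 𝕜 : Type*} [RCLike 𝕜]

section Loewner

lemma isHermitian_sub_smul {A B : Matrix ι ι 𝕜} (hA : A.IsHermitian) (hB : B.IsHermitian)
    (t : ℝ) : (A - t • B).IsHermitian :=
  hA.sub (hB.smul (.all t))

lemma posDef_add_smul_one [DecidableEq ι] {B : Matrix ι ι 𝕜} (hB : B.PosSemidef) {c : ℝ}
    (hc : 0 < c) : (B + c • (1 : Matrix ι ι 𝕜)).PosDef :=
  PosDef.posSemidef_add hB (PosDef.one.smul hc)

lemma lowerSemicontinuous_rank [Finite ι] [Fintype κ] :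
    LowerSemicontinuous (rank : Matrix ι κ 𝕜 → ℕ) := by
  classical
  have := Fintype.ofFinite ι
  let toCLM : Matrix ι κ 𝕜 →ₗ[𝕜] (κ → 𝕜) →L[𝕜] (ι → 𝕜) :=
    LinearMap.toContinuousLinearMap.toLinearMap ∘ₗ toLin'.toLinearMap
  rw [lowerSemicontinuous_iff_isOpen_preimage]
  intro r
  convert! (isOpen_setOfPred_nat_le_rank (r + 1)).preimage
    toCLM.continuous_of_finiteDimensional using 1
  ext X
  have hrank : (toCLM X : (κ → 𝕜) →ₗ[𝕜] (ι → 𝕜)).rank = X.rank := by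
    rw [Matrix.rank, Module.finrank_eq_rank]
    rfl
  change r < X.rank ↔ ((r + 1 : ℕ) : Cardinal) ≤ (toCLM X : (κ → 𝕜) →ₗ[𝕜] (ι → 𝕜)).rank
  rw [hrank, Nat.cast_le, Nat.succ_le_iff]

lemma conjTranspose_mul_mul_mono [Fintype ι] [Finite κ] {X Y : Matrix ι ι 𝕜} (h : X ≤ Y)
    (M : Matrix ι κ 𝕜) : Mᴴ * X * M ≤ Mᴴ * Y * M := by
  have := Fintype.ofFinite κ
  rw [le_iff, ← Matrix.sub_mul, ← Matrix.mul_sub]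
  exact PosSemidef.conjTranspose_mul_mul_same h M

variable [Fintype ι]

lemma mulVec_eq_zero_of_nonneg_of_le {P Q : Matrix ι ι 𝕜} (hP : 0 ≤ P) (hPQ : P ≤ Q)
    {v : ι → 𝕜} (hv : Q *ᵥ v = 0) : P *ᵥ v = 0 := by
  rw [← hP.posSemidef.dotProduct_mulVec_zero_iff]
  refine le_antisymm ?_ (hP.posSemidef.dotProduct_mulVec_nonneg v)
  simpa [sub_mulVec, hv] using PosSemidef.dotProduct_mulVec_nonneg hPQ v

lemma rank_le_rank_of_nonneg_of_le {P Q : Matrix ι ι 𝕜} (hP : 0 ≤ P) (hPQ : P ≤ Q) :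
    P.rank ≤ Q.rank := by
  have hker : Q.mulVecLin.ker ≤ P.mulVecLin.ker :=
    fun _ hv ↦ mulVec_eq_zero_of_nonneg_of_le hP hPQ hv
  have hPn := P.mulVecLin.finrank_range_add_finrank_ker
  have hQn := Q.mulVecLin.finrank_range_add_finrank_ker
  have := Submodule.finrank_mono hker
  rw [Matrix.rank, Matrix.rank]
  lia

lemma rank_le_rank_mul_mul_self {P : Matrix ι ι 𝕜} (hP : P.IsHermitian) :
    P.rank ≤ (P * P * P).rank := by
  have rank_sq {Q : Matrix ι ι 𝕜} (hQ : Q.IsHermitian) : (Q * Q).rank = Q.rank := by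
    simpa only [hQ.eq] using rank_self_mul_conjTranspose Q
  calc P.rank = (P * P * (P * P)).rank := by
        rw [rank_sq (by simpa only [hP.eq] using isHermitian_mul_conjTranspose_self P), rank_sq hP]
    _ = (P * P * P * P).rank := by rw [← mul_assoc]
    _ ≤ (P * P * P).rank := rank_mul_le_left _ _

end Loewner

variable [Fintype ι] [Fintype κ] [DecidableEq ι] [DecidableEq κ]

section FunctionalCalculus

lemma posPart_eq_cfc_max (X : Matrix ι ι 𝕜) : X⁺ = cfc (fun x : ℝ ↦ max x 0) X :=
  cfcₙ_eq_cfc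

lemma rank_cfc {X : Matrix ι ι 𝕜} (hX : X.IsHermitian) (f : ℝ → ℝ) :
    (cfc f X).rank = Fintype.card {i // f (hX.eigenvalues i) ≠ 0} := by
  have hU : IsUnit (hX.eigenvectorUnitary : Matrix ι ι 𝕜).det :=
    (isUnit_iff_isUnit_det _).1 (Unitary.isUnit_coe (U := hX.eigenvectorUnitary))
  rw [hX.cfc_eq, IsHermitian.cfc, Unitary.conjStarAlgAut_apply, rank_mul_eq_left_of_isUnit_det,
    rank_mul_eq_right_of_isUnit_det _ _ hU, rank_diagonal]
  · simp
  · rw [star_eq_conjTranspose, det_conjTranspose]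
    exact hU.star

/-- The diagonal entries of `A` in the eigenvector basis of `B`: the spectral weights which express
traces `Tr[A f(B)]` in terms of the eigenvalues of `B`. -/
def eigenvectorWeight (A : Matrix ι ι 𝕜) {B : Matrix ι ι 𝕜} (hB : B.IsHermitian) (i : ι) : ℝ :=
  RCLike.re (star ⇑(hB.eigenvectorBasis i) ⬝ᵥ A *ᵥ ⇑(hB.eigenvectorBasis i))

lemma eigenvectorWeight_eq_zero_or_eigenvalues_pos {A B : Matrix ι ι 𝕜} (hB : B.PosSemidef)
    (hker : ∀ v, B *ᵥ v = 0 → A *ᵥ v = 0) (i : ι) :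
    eigenvectorWeight A hB.1 i = 0 ∨ 0 < hB.1.eigenvalues i := by
  rcases (hB.eigenvalues_nonneg i).eq_or_lt' with hzero | hpos
  · left
    have hBv : B *ᵥ ⇑(hB.1.eigenvectorBasis i) = 0 := by
      rw [hB.1.mulVec_eigenvectorBasis, hzero, zero_smul]
    rw [eigenvectorWeight, hker _ hBv, dotProduct_zero, map_zero]
  · exact .inr hpos

lemma trace_mul_cfc (A : Matrix ι ι 𝕜) {B : Matrix ι ι 𝕜} (hB : B.IsHermitian) (f : ℝ → ℝ) :
    RCLike.re (A * cfc f B).trace =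
      ∑ i, eigenvectorWeight A hB i * f (hB.eigenvalues i) := by
  rw [hB.cfc_eq, IsHermitian.cfc, Unitary.conjStarAlgAut_apply, ← mul_assoc, trace_mul_comm,
    ← mul_assoc, ← mul_assoc, trace, map_sum]
  refine Finset.sum_congr rfl fun i _ ↦ ?_
  have hentry : (star (hB.eigenvectorUnitary : Matrix ι ι 𝕜) * A * hB.eigenvectorUnitary) i i =
      star ⇑(hB.eigenvectorBasis i) ⬝ᵥ A *ᵥ ⇑(hB.eigenvectorBasis i) := by
    rw [mul_assoc, ← hB.eigenvectorUnitary_col_eq]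
    rfl
  rw [diag_apply, mul_diagonal, hentry]
  exact RCLike.re_mul_ofReal _ _

lemma trace_cfc {X : Matrix ι ι 𝕜} (hX : X.IsHermitian) (f : ℝ → ℝ) :
    RCLike.re (cfc f X).trace = ∑ i, f (hX.eigenvalues i) := by
  rw [hX.cfc_eq, IsHermitian.cfc, Unitary.conjStarAlgAut_apply, trace_mul_comm, ← mul_assoc]
  simp [trace]

open scoped Matrix.Norms.L2Operator in
lemma continuous_posPart_comp {T : Type*} [TopologicalSpace T] {X : T → Matrix ι ι 𝕜}
    (hX : Continuous X) (hherm : ∀ x, (X x).IsHermitian) : Continuous fun x ↦ (X x)⁺ := by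
  let : NormedAlgebra ℝ (Matrix ι ι 𝕜) :=
    { norm_smul_le r M := by
        rw [RCLike.real_smul_eq_coe_smul (K := 𝕜), Real.norm_eq_abs, ← RCLike.norm_ofReal (K := 𝕜)]
        exact norm_smul_le _ _ }
  simp only [posPart_eq_cfc_max]
  exact hX.cfc_of_mem_nhdsSet (s := Set.univ) (f := fun x : ℝ ↦ max x 0) (by simp) hherm

lemma inv_add_smul_one_eq_cfc {B : Matrix ι ι 𝕜} (hB : B.PosSemidef) {c : ℝ} (hc : 0 < c) :
    (B + c • (1 : Matrix ι ι 𝕜))⁻¹ = cfc (fun x : ℝ ↦ (x + c)⁻¹) B := by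
  have hspec : ∀ x ∈ spectrum ℝ B, x + c ≠ 0 := fun x hx ↦
    (add_pos_of_nonneg_of_pos (spectrum_nonneg_of_nonneg hB.nonneg hx) hc).ne'
  have hinv := cfc_inv (fun x : ℝ ↦ x + c) B hspec (ha := hB.1.isSelfAdjoint)
  rw [cfc_add_const c _ B (ha := hB.1.isSelfAdjoint), cfc_id' ℝ B hB.1.isSelfAdjoint,
    Algebra.algebraMap_eq_smul_one] at hinv
  rw [hinv, nonsing_inv_eq_ringInverse]

end FunctionalCalculus

section PositiveIndex

/-- The positive index of inertia of a Hermitian matrix, i.e. the number of its positive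
eigenvalues counted with multiplicity, encoded as the rank of the positive part. -/
def positiveIndex (X : Matrix ι ι 𝕜) : ℕ := X⁺.rank

/-- The trace of the positive part of a Hermitian matrix; `posTrace (A - γ • B)` is the hockey-stick
divergence of `A` and `B` at level `γ`. -/
def posTrace (X : Matrix ι ι 𝕜) : ℝ := RCLike.re X⁺.trace

lemma positiveIndex_le_of_le_conjTranspose_mul_mul {X : Matrix κ κ 𝕜} (hX : X.IsHermitian)
    {Y : Matrix ι ι 𝕜} (hY : Y.IsHermitian) {S : Matrix κ ι 𝕜} (h : Y ≤ Sᴴ * X * S) :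
    positiveIndex Y ≤ positiveIndex X := by
  have hP : Y⁺.IsHermitian := (CFC.posPart_nonneg Y).posSemidef.1
  have hcube : Y⁺ᴴ * Y * Y⁺ = Y⁺ * Y⁺ * Y⁺ := by
    nth_rewrite 2 [← CFC.posPart_sub_negPart Y hY]
    rw [hP.eq, mul_sub, CFC.posPart_mul_negPart, sub_zero]
  have hle : Y⁺ * Y⁺ * Y⁺ ≤ (S * Y⁺)ᴴ * X⁺ * (S * Y⁺) := calc
    Y⁺ * Y⁺ * Y⁺ ≤ Y⁺ᴴ * (Sᴴ * X * S) * Y⁺ := hcube ▸ conjTranspose_mul_mul_mono h Y⁺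
    _ = (S * Y⁺)ᴴ * X * (S * Y⁺) := by simp only [conjTranspose_mul, Matrix.mul_assoc]
    _ ≤ (S * Y⁺)ᴴ * X⁺ * (S * Y⁺) := conjTranspose_mul_mul_mono (CFC.le_posPart hX) _
  have hnonneg : 0 ≤ Y⁺ * Y⁺ * Y⁺ := by
    have := (CFC.posPart_nonneg Y).posSemidef.conjTranspose_mul_mul_same Y⁺
    rw [hP.eq] at this
    exact this.nonneg
  calc Y⁺.rank ≤ (Y⁺ * Y⁺ * Y⁺).rank := rank_le_rank_mul_mul_self hP
    _ ≤ ((S * Y⁺)ᴴ * X⁺ * (S * Y⁺)).rank := rank_le_rank_of_nonneg_of_le hnonneg hle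
    _ ≤ ((S * Y⁺)ᴴ * X⁺).rank := rank_mul_le_left _ _
    _ ≤ X⁺.rank := rank_mul_le_right _ _

lemma positiveIndex_mono {X Y : Matrix ι ι 𝕜} (hX : X.IsHermitian) (hY : Y.IsHermitian)
    (h : X ≤ Y) : positiveIndex X ≤ positiveIndex Y :=
  positiveIndex_le_of_le_conjTranspose_mul_mul hY hX (S := 1) (by simpa using h)

lemma positiveIndex_conjTranspose_mul_mul {X S : Matrix ι ι 𝕜} (hX : X.IsHermitian)
    (hS : IsUnit S) : positiveIndex (Sᴴ * X * S) = positiveIndex X := by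
  have hSX := isHermitian_conjTranspose_mul_mul S hX
  refine le_antisymm (positiveIndex_le_of_le_conjTranspose_mul_mul hX hSX le_rfl)
    (positiveIndex_le_of_le_conjTranspose_mul_mul hSX hX (S := S⁻¹) (le_of_eq ?_))
  have hinv : S * S⁻¹ = 1 := mul_nonsing_inv S ((isUnit_iff_isUnit_det S).1 hS)
  calc X = (S * S⁻¹)ᴴ * X * (S * S⁻¹) := by simp [hinv]
    _ = S⁻¹ᴴ * (Sᴴ * X * S) * S⁻¹ := by simp only [conjTranspose_mul, Matrix.mul_assoc]

lemma measurable_positiveIndex_comp {T : Type*} [TopologicalSpace T] [MeasurableSpace T]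
    [OpensMeasurableSpace T] {X : T → Matrix ι ι 𝕜} (hX : Continuous X)
    (hherm : ∀ x, (X x).IsHermitian) : Measurable fun x ↦ (positiveIndex (X x) : ℝ) :=
  measurable_from_nat.comp
    (lowerSemicontinuous_rank.comp (continuous_posPart_comp hX hherm)).measurable

lemma posTrace_eq_sum {X : Matrix ι ι 𝕜} (hX : X.IsHermitian) :
    posTrace X = ∑ i, max (hX.eigenvalues i) 0 := by
  rw [posTrace, posPart_eq_cfc_max, trace_cfc hX]

lemma posTrace_eq_add_posTrace_neg {X : Matrix ι ι 𝕜} (hX : X.IsHermitian) :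
    posTrace X = posTrace (-X) + RCLike.re X.trace := by
  nth_rewrite 3 [← CFC.posPart_sub_negPart X hX]
  rw [posTrace, posTrace, CFC.posPart_neg, trace_sub, map_sub, add_sub_cancel]

lemma posTrace_smul (X : Matrix ι ι 𝕜) {r : ℝ} (hr : 0 ≤ r) :
    posTrace (r • X) = r * posTrace X := by
  rw [posTrace, posTrace, CFC.posPart_smul_of_nonneg hr, trace_smul, RCLike.smul_re]

lemma posTrace_of_posSemidef {X : Matrix ι ι 𝕜} (hX : X.PosSemidef) :
    posTrace X = RCLike.re X.trace := by
  rw [posTrace, (CFC.posPart_eq_self X).2 hX.nonneg]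

lemma posTrace_smul_of_posSemidef {X : Matrix ι ι 𝕜} (hX : X.PosSemidef) (r : ℝ) :
    posTrace (r • X) = max r 0 * RCLike.re X.trace := by
  rcases le_total 0 r with hr | hr
  · rw [posTrace_smul _ hr, posTrace_of_posSemidef hX, max_eq_left hr]
  · have hneg : X⁻ = 0 := (CFC.negPart_eq_zero_iff X hX.1.isSelfAdjoint).2 hX.nonneg
    simp [posTrace, CFC.posPart_smul_of_nonpos hr, hneg, hr]

lemma positiveIndex_sub_smul_one {X : Matrix ι ι 𝕜} (hX : X.IsHermitian) (s : ℝ) :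
    (positiveIndex (X - s • (1 : Matrix ι ι 𝕜)) : ℝ) =
      ∑ i, (Set.Iio (hX.eigenvalues i)).indicator (fun _ ↦ 1) s := by
  have hshift : X - s • (1 : Matrix ι ι 𝕜) = cfc (fun x : ℝ ↦ x - s) X := by
    simp only [sub_eq_add_neg]
    rw [cfc_add_const (-s) _ X, cfc_id' ℝ X hX.isSelfAdjoint, Algebra.algebraMap_eq_smul_one,
      neg_smul]
  rw [positiveIndex, posPart_eq_cfc_max, hshift,
    ← cfc_comp' (fun x : ℝ ↦ max x 0) (fun x : ℝ ↦ x - s) X, rank_cfc hX]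
  simp [Set.indicator_apply, Fintype.card_subtype]

end PositiveIndex

section LayerCake

open Set

lemma integrableOn_indicator_Iio (a : ℝ) :
    IntegrableOn ((Iio a).indicator fun _ ↦ (1 : ℝ)) (Ioi 0) := by
  rw [IntegrableOn, integrable_indicator_iff measurableSet_Iio, IntegrableOn,
    Measure.restrict_restrict measurableSet_Iio, inter_comm, Ioi_inter_Iio]
  exact integrableOn_const (by simp)

lemma integral_indicator_Iio (a : ℝ) :
    ∫ s in Ioi 0, (Iio a).indicator (fun _ ↦ (1 : ℝ)) s = max a 0 := by
  rw [setIntegral_indicator measurableSet_Iio, Ioi_inter_Iio]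
  simp [Measure.real, ENNReal.toReal_ofReal']

lemma integrableOn_positiveIndex_sub_smul_one {X : Matrix ι ι 𝕜} (hX : X.IsHermitian) :
    IntegrableOn (fun s : ℝ ↦ (positiveIndex (X - s • (1 : Matrix ι ι 𝕜)) : ℝ)) (Ioi 0) := by
  simp only [positiveIndex_sub_smul_one hX]
  exact integrable_finsetSum _ fun i _ ↦ integrableOn_indicator_Iio _

lemma integral_positiveIndex_sub_smul_one {X : Matrix ι ι 𝕜} (hX : X.IsHermitian) :
    ∫ s in Ioi (0 : ℝ), (positiveIndex (X - s • (1 : Matrix ι ι 𝕜)) : ℝ) = posTrace X := by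
  simp only [positiveIndex_sub_smul_one hX, posTrace_eq_sum hX]
  rw [integral_finsetSum _ fun i _ ↦ integrableOn_indicator_Iio _]
  simp only [integral_indicator_Iio]

lemma exists_posSemidef_positiveIndex_sub_smul_eq {A C : Matrix ι ι 𝕜} (hA : A.PosSemidef)
    (hC : C.PosDef) :
    ∃ Z : Matrix ι ι 𝕜, Z.PosSemidef ∧ Z.trace = (A * C⁻¹).trace ∧
      ∀ t : ℝ, positiveIndex (A - t • C) = positiveIndex (Z - t • (1 : Matrix ι ι 𝕜)) := by
  obtain ⟨S, hS, rfl⟩ := CStarAlgebra.isStrictlyPositive_iff_eq_star_mul_self.1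
    hC.isStrictlyPositive
  have hSinv : S⁻¹ * S = 1 := nonsing_inv_mul S ((isUnit_iff_isUnit_det S).1 hS)
  have hZ : (S⁻¹ᴴ * A * S⁻¹).PosSemidef := hA.conjTranspose_mul_mul_same S⁻¹
  refine ⟨S⁻¹ᴴ * A * S⁻¹, hZ, ?_, fun t ↦ ?_⟩
  · rw [star_eq_conjTranspose, Matrix.mul_inv_rev, ← conjTranspose_nonsing_inv, mul_assoc,
      trace_mul_comm, mul_assoc]
  · have hAZ : Sᴴ * (S⁻¹ᴴ * A * S⁻¹) * S = A := calc
      Sᴴ * (S⁻¹ᴴ * A * S⁻¹) * S = (S⁻¹ * S)ᴴ * A * (S⁻¹ * S) := by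
        simp only [conjTranspose_mul, mul_assoc]
      _ = A := by simp [hSinv]
    rw [← positiveIndex_conjTranspose_mul_mul (isHermitian_sub_smul hZ.1 isHermitian_one t) hS,
      mul_sub, sub_mul, hAZ]
    simp [star_eq_conjTranspose]

lemma integrableOn_positiveIndex_sub_smul {A C : Matrix ι ι 𝕜} (hA : A.PosSemidef)
    (hC : C.PosDef) :
    IntegrableOn (fun t : ℝ ↦ (positiveIndex (A - t • C) : ℝ)) (Ioi 0) := by
  obtain ⟨Z, hZ, -, hindex⟩ := exists_posSemidef_positiveIndex_sub_smul_eq hA hC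
  simpa only [hindex] using integrableOn_positiveIndex_sub_smul_one hZ.1

lemma integral_positiveIndex_sub_smul {A C : Matrix ι ι 𝕜} (hA : A.PosSemidef)
    (hC : C.PosDef) :
    ∫ t in Ioi (0 : ℝ), (positiveIndex (A - t • C) : ℝ) = RCLike.re (A * C⁻¹).trace := by
  obtain ⟨Z, hZ, htrace, hindex⟩ := exists_posSemidef_positiveIndex_sub_smul_eq hA hC
  simp only [hindex]
  rw [integral_positiveIndex_sub_smul_one hZ.1, ← htrace, posTrace_of_posSemidef hZ]

lemma integrableOn_positiveIndex_sub_smul_add {A B : Matrix ι ι 𝕜} (hA : A.IsHermitian)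
    (hB : B.IsHermitian) {t : ℝ} (ht : 0 < t) :
    IntegrableOn (fun c : ℝ ↦ (positiveIndex (A - t • (B + c • (1 : Matrix ι ι 𝕜))) : ℝ))
      (Ioi 0) := by
  simp only [smul_add, smul_smul, ← sub_sub]
  rw [integrableOn_Ioi_comp_mul_left_iff
    (fun s ↦ (positiveIndex (A - t • B - s • (1 : Matrix ι ι 𝕜)) : ℝ)) 0 ht, mul_zero]
  exact integrableOn_positiveIndex_sub_smul_one (isHermitian_sub_smul hA hB t)

lemma integral_positiveIndex_sub_smul_add {A B : Matrix ι ι 𝕜} (hA : A.IsHermitian)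
    (hB : B.IsHermitian) {t : ℝ} (ht : 0 < t) :
    ∫ c in Ioi (0 : ℝ), (positiveIndex (A - t • (B + c • (1 : Matrix ι ι 𝕜))) : ℝ) =
      t⁻¹ * posTrace (A - t • B) := by
  simp only [smul_add, smul_smul, ← sub_sub]
  rw [integral_comp_mul_left_Ioi
    (fun s ↦ (positiveIndex (A - t • B - s • (1 : Matrix ι ι 𝕜)) : ℝ)) 0 ht, mul_zero,
    integral_positiveIndex_sub_smul_one (isHermitian_sub_smul hA hB t), smul_eq_mul]

end LayerCake

section Logarithm

open Set Filter

lemma hasDerivAt_log_add_sub_log_add {a b : ℝ} (ha : 0 < a) (hb : 0 < b) {c : ℝ} (hc : 0 ≤ c) :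
    HasDerivAt (fun c ↦ Real.log (a + c) - Real.log (b + c)) ((a + c)⁻¹ - (b + c)⁻¹) c := by
  simpa using (((hasDerivAt_id c).const_add a).log (by positivity)).fun_sub
    (((hasDerivAt_id c).const_add b).log (by positivity))

lemma tendsto_log_add_sub_log_add (a b : ℝ) :
    Tendsto (fun c ↦ Real.log (a + c) - Real.log (b + c)) atTop (nhds 0) := by
  simpa [add_comm] using
    (Real.tendsto_log_comp_add_sub_log a).sub (Real.tendsto_log_comp_add_sub_log b)

lemma integrableOn_inv_add_sub_inv_add {a b : ℝ} (ha : 0 < a) (hb : 0 < b) :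
    IntegrableOn (fun c ↦ (a + c)⁻¹ - (b + c)⁻¹) (Ioi 0) := by
  wlog hab : a ≤ b generalizing a b
  · simpa only [Pi.neg_def, neg_sub] using (this hb ha (le_of_not_ge hab)).neg
  refine integrableOn_Ioi_deriv_of_nonneg'
    (fun c hc ↦ hasDerivAt_log_add_sub_log_add ha hb hc) (fun c hc ↦ ?_)
    (tendsto_log_add_sub_log_add a b)
  have : 0 < a + c := add_pos ha hc
  rw [sub_nonneg]
  gcongr

lemma integral_inv_add_sub_inv_add {a b : ℝ} (ha : 0 < a) (hb : 0 < b) :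
    ∫ c in Ioi 0, ((a + c)⁻¹ - (b + c)⁻¹) = Real.log b - Real.log a := by
  rw [integral_Ioi_of_hasDerivAt_of_tendsto'
    (fun c hc ↦ hasDerivAt_log_add_sub_log_add ha hb hc)
    (integrableOn_inv_add_sub_inv_add ha hb) (tendsto_log_add_sub_log_add a b)]
  simp

lemma integrableOn_mul_inv_one_add_sub_inv_add {w b : ℝ} (h : w = 0 ∨ 0 < b) :
    IntegrableOn (fun c ↦ w * ((1 + c)⁻¹ - (b + c)⁻¹)) (Ioi 0) := by
  rcases h with rfl | hb
  · simp
  · exact (integrableOn_inv_add_sub_inv_add one_pos hb).const_mul w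

lemma integral_mul_inv_one_add_sub_inv_add {w b : ℝ} (h : w = 0 ∨ 0 < b) :
    ∫ c in Ioi 0, w * ((1 + c)⁻¹ - (b + c)⁻¹) = w * Real.log b := by
  rcases h with rfl | hb
  · simp
  · rw [integral_const_mul, integral_inv_add_sub_inv_add one_pos hb, Real.log_one, sub_zero]

/-- The trace of `A` against the resolvent `(B + c)⁻¹`. -/
def resolventTrace (A B : Matrix ι ι 𝕜) (c : ℝ) : ℝ :=
  RCLike.re (A * (B + c • (1 : Matrix ι ι 𝕜))⁻¹).trace

lemma trace_sub_resolventTrace_eq_sum (A : Matrix ι ι 𝕜) {B : Matrix ι ι 𝕜} (hB : B.PosSemidef)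
    {c : ℝ} (hc : 0 < c) :
    (1 + c)⁻¹ * RCLike.re A.trace - resolventTrace A B c =
      ∑ i, eigenvectorWeight A hB.1 i * ((1 + c)⁻¹ - (hB.1.eigenvalues i + c)⁻¹) := by
  have htrace : RCLike.re A.trace = ∑ i, eigenvectorWeight A hB.1 i := by
    simpa [cfc_const_one ℝ B hB.1.isSelfAdjoint] using trace_mul_cfc A hB.1 fun _ ↦ 1
  rw [resolventTrace, inv_add_smul_one_eq_cfc hB hc, trace_mul_cfc A hB.1, htrace, Finset.mul_sum,
    ← Finset.sum_sub_distrib]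
  exact Finset.sum_congr rfl fun i _ ↦ by ring

lemma integrableOn_trace_sub_resolventTrace {A B : Matrix ι ι 𝕜} (hB : B.PosSemidef)
    (hker : ∀ v, B *ᵥ v = 0 → A *ᵥ v = 0) :
    IntegrableOn (fun c ↦ (1 + c)⁻¹ * RCLike.re A.trace - resolventTrace A B c) (Ioi 0) := by
  have hweight := eigenvectorWeight_eq_zero_or_eigenvalues_pos hB hker
  exact IntegrableOn.congr_fun
    (integrable_finsetSum _ fun i _ ↦ integrableOn_mul_inv_one_add_sub_inv_add (hweight i))
    (fun c hc ↦ (trace_sub_resolventTrace_eq_sum A hB hc).symm) measurableSet_Ioi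

lemma integral_trace_sub_resolventTrace {A B : Matrix ι ι 𝕜} (hB : B.PosSemidef)
    (hker : ∀ v, B *ᵥ v = 0 → A *ᵥ v = 0) :
    ∫ c in Ioi 0, ((1 + c)⁻¹ * RCLike.re A.trace - resolventTrace A B c) =
      RCLike.re (A * cfc Real.log B).trace := by
  have hweight := eigenvectorWeight_eq_zero_or_eigenvalues_pos hB hker
  rw [setIntegral_congr_fun measurableSet_Ioi
      (fun c hc ↦ trace_sub_resolventTrace_eq_sum A hB hc),
    integral_finsetSum _ fun i _ ↦ integrableOn_mul_inv_one_add_sub_inv_add (hweight i),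
    trace_mul_cfc A hB.1]
  simp only [integral_mul_inv_one_add_sub_inv_add (hweight _)]

lemma integrableOn_resolventTrace_sub {A B C : Matrix ι ι 𝕜} (hB : B.PosSemidef)
    (hC : C.PosSemidef) (hkerB : ∀ v, B *ᵥ v = 0 → A *ᵥ v = 0)
    (hkerC : ∀ v, C *ᵥ v = 0 → A *ᵥ v = 0) :
    IntegrableOn (fun c ↦ resolventTrace A B c - resolventTrace A C c) (Ioi 0) := by
  simpa only [Pi.sub_def, sub_sub_sub_cancel_left] using
    (integrableOn_trace_sub_resolventTrace hC hkerC).sub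
      (integrableOn_trace_sub_resolventTrace hB hkerB)

lemma integral_resolventTrace_sub {A B C : Matrix ι ι 𝕜} (hB : B.PosSemidef)
    (hC : C.PosSemidef) (hkerB : ∀ v, B *ᵥ v = 0 → A *ᵥ v = 0)
    (hkerC : ∀ v, C *ᵥ v = 0 → A *ᵥ v = 0) :
    ∫ c in Ioi 0, (resolventTrace A B c - resolventTrace A C c) =
      RCLike.re (A * (cfc Real.log C - cfc Real.log B)).trace := by
  rw [mul_sub, trace_sub, map_sub, ← integral_trace_sub_resolventTrace hC hkerC,
    ← integral_trace_sub_resolventTrace hB hkerB,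
    ← integral_sub (integrableOn_trace_sub_resolventTrace hC hkerC)
      (integrableOn_trace_sub_resolventTrace hB hkerB)]
  simp only [sub_sub_sub_cancel_left]

end Logarithm

section Fubini

open Set

/-- The number of positive eigenvalues of the pencil `A - t • (B + c • 1)` in excess of those of
`A - t • (C + c • 1)`. Integrating it over `t` gives a difference of resolvent traces, integrating
it over `c` a difference of hockey-stick divergences. -/
def positiveIndexGap (A B C : Matrix ι ι 𝕜) (x : ℝ × ℝ) : ℝ :=
  positiveIndex (A - x.2 • (B + x.1 • (1 : Matrix ι ι 𝕜))) -
    positiveIndex (A - x.2 • (C + x.1 • (1 : Matrix ι ι 𝕜)))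

lemma measurable_positiveIndexGap {A B C : Matrix ι ι 𝕜} (hA : A.IsHermitian)
    (hB : B.IsHermitian) (hC : C.IsHermitian) : Measurable (positiveIndexGap A B C) := by
  have hpencil {M : Matrix ι ι 𝕜} (hM : M.IsHermitian) (x : ℝ × ℝ) :
      (A - x.2 • (M + x.1 • (1 : Matrix ι ι 𝕜))).IsHermitian :=
    isHermitian_sub_smul hA (hM.add (isHermitian_one.smul (.all x.1))) x.2
  exact (measurable_positiveIndex_comp (by fun_prop) (hpencil hB)).sub
    (measurable_positiveIndex_comp (by fun_prop) (hpencil hC))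

lemma positiveIndexGap_nonneg {A B C : Matrix ι ι 𝕜} (hA : A.IsHermitian)
    (hB : B.IsHermitian) (hC : C.IsHermitian) (hBC : B ≤ C) (c : ℝ) {t : ℝ} (ht : 0 ≤ t) :
    0 ≤ positiveIndexGap A B C (c, t) := by
  have hshift {M : Matrix ι ι 𝕜} (hM : M.IsHermitian) :
      (A - t • (M + c • (1 : Matrix ι ι 𝕜))).IsHermitian :=
    isHermitian_sub_smul hA (hM.add (isHermitian_one.smul (.all c))) t
  rw [positiveIndexGap, sub_nonneg, Nat.cast_le]
  refine positiveIndex_mono (hshift hC) (hshift hB) ?_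
  gcongr

lemma integral_positiveIndexGap_left {A B C : Matrix ι ι 𝕜} (hA : A.IsHermitian)
    (hB : B.IsHermitian) (hC : C.IsHermitian) {t : ℝ} (ht : 0 < t) :
    ∫ c in Ioi 0, positiveIndexGap A B C (c, t) =
      t⁻¹ * (posTrace (A - t • B) - posTrace (A - t • C)) := by
  simp only [positiveIndexGap]
  rw [integral_sub (integrableOn_positiveIndex_sub_smul_add hA hB ht)
      (integrableOn_positiveIndex_sub_smul_add hA hC ht),
    integral_positiveIndex_sub_smul_add hA hB ht, integral_positiveIndex_sub_smul_add hA hC ht,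
    mul_sub]

lemma integrableOn_positiveIndexGap_right {A B C : Matrix ι ι 𝕜} (hA : A.PosSemidef)
    (hB : B.PosSemidef) (hC : C.PosSemidef) {c : ℝ} (hc : 0 < c) :
    IntegrableOn (fun t ↦ positiveIndexGap A B C (c, t)) (Ioi 0) := by
  simp only [positiveIndexGap]
  exact (integrableOn_positiveIndex_sub_smul hA (posDef_add_smul_one hB hc)).sub
    (integrableOn_positiveIndex_sub_smul hA (posDef_add_smul_one hC hc))

lemma integral_positiveIndexGap_right {A B C : Matrix ι ι 𝕜} (hA : A.PosSemidef)
    (hB : B.PosSemidef) (hC : C.PosSemidef) {c : ℝ} (hc : 0 < c) :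
    ∫ t in Ioi 0, positiveIndexGap A B C (c, t) =
      resolventTrace A B c - resolventTrace A C c := by
  have hBc := posDef_add_smul_one hB hc
  have hCc := posDef_add_smul_one hC hc
  simp only [positiveIndexGap]
  rw [integral_sub (integrableOn_positiveIndex_sub_smul hA hBc)
      (integrableOn_positiveIndex_sub_smul hA hCc),
    integral_positiveIndex_sub_smul hA hBc, integral_positiveIndex_sub_smul hA hCc,
    resolventTrace, resolventTrace]

lemma integrable_positiveIndexGap {A B C : Matrix ι ι 𝕜} (hA : A.PosSemidef)
    (hB : B.PosSemidef) (hC : C.PosSemidef) (hBC : B ≤ C)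
    (hker : ∀ v, B *ᵥ v = 0 → A *ᵥ v = 0) :
    Integrable (positiveIndexGap A B C)
      ((volume.restrict (Ioi 0)).prod (volume.restrict (Ioi 0))) := by
  have hkerC (v : ι → 𝕜) (hv : C *ᵥ v = 0) : A *ᵥ v = 0 :=
    hker v (mulVec_eq_zero_of_nonneg_of_le hB.nonneg hBC hv)
  rw [integrable_prod_iff (measurable_positiveIndexGap hA.1 hB.1 hC.1).aestronglyMeasurable]
  constructor
  · filter_upwards [ae_restrict_mem measurableSet_Ioi] with c hc
    exact integrableOn_positiveIndexGap_right hA hB hC hc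
  · refine (integrableOn_resolventTrace_sub hB hC hker hkerC).congr ?_
    filter_upwards [ae_restrict_mem measurableSet_Ioi] with c hc
    rw [← integral_positiveIndexGap_right hA hB hC hc]
    refine setIntegral_congr_fun measurableSet_Ioi fun t ht ↦ ?_
    exact (Real.norm_of_nonneg (positiveIndexGap_nonneg hA.1 hB.1 hC.1 hBC c (le_of_lt ht))).symm

lemma integrableOn_posTrace_sub_of_le {A B C : Matrix ι ι 𝕜} (hA : A.PosSemidef)
    (hB : B.PosSemidef) (hC : C.PosSemidef) (hBC : B ≤ C)
    (hker : ∀ v, B *ᵥ v = 0 → A *ᵥ v = 0) :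
    IntegrableOn (fun t ↦ t⁻¹ * (posTrace (A - t • B) - posTrace (A - t • C))) (Ioi 0) := by
  refine (integrable_positiveIndexGap hA hB hC hBC hker).integral_prod_right.congr ?_
  filter_upwards [ae_restrict_mem measurableSet_Ioi] with t ht
  exact integral_positiveIndexGap_left hA.1 hB.1 hC.1 ht

lemma integral_posTrace_sub_of_le {A B C : Matrix ι ι 𝕜} (hA : A.PosSemidef)
    (hB : B.PosSemidef) (hC : C.PosSemidef) (hBC : B ≤ C)
    (hker : ∀ v, B *ᵥ v = 0 → A *ᵥ v = 0) :
    ∫ t in Ioi 0, t⁻¹ * (posTrace (A - t • B) - posTrace (A - t • C)) =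
      RCLike.re (A * (cfc Real.log C - cfc Real.log B)).trace := by
  have hkerC (v : ι → 𝕜) (hv : C *ᵥ v = 0) : A *ᵥ v = 0 :=
    hker v (mulVec_eq_zero_of_nonneg_of_le hB.nonneg hBC hv)
  calc ∫ t in Ioi 0, t⁻¹ * (posTrace (A - t • B) - posTrace (A - t • C))
    _ = ∫ t in Ioi 0, ∫ c in Ioi 0, positiveIndexGap A B C (c, t) :=
      setIntegral_congr_fun measurableSet_Ioi fun t ht ↦
        (integral_positiveIndexGap_left hA.1 hB.1 hC.1 ht).symm
    _ = ∫ c in Ioi 0, ∫ t in Ioi 0, positiveIndexGap A B C (c, t) :=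
      (integral_integral_swap (f := fun c t ↦ positiveIndexGap A B C (c, t))
        (integrable_positiveIndexGap hA hB hC hBC hker)).symm
    _ = ∫ c in Ioi 0, (resolventTrace A B c - resolventTrace A C c) :=
      setIntegral_congr_fun measurableSet_Ioi fun c hc ↦
        integral_positiveIndexGap_right hA hB hC hc
    _ = RCLike.re (A * (cfc Real.log C - cfc Real.log B)).trace :=
      integral_resolventTrace_sub hB hC hker hkerC

lemma integrableOn_posTrace_sub {A B C : Matrix ι ι 𝕜} (hA : A.PosSemidef)
    (hB : B.PosSemidef) (hC : C.PosSemidef) (hkerB : ∀ v, B *ᵥ v = 0 → A *ᵥ v = 0)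
    (hkerC : ∀ v, C *ᵥ v = 0 → A *ᵥ v = 0) :
    IntegrableOn (fun t ↦ t⁻¹ * (posTrace (A - t • B) - posTrace (A - t • C))) (Ioi 0) := by
  have hBD := integrableOn_posTrace_sub_of_le hA hB (hB.add hC)
    (le_add_of_nonneg_right hC.nonneg) hkerB
  have hCD := integrableOn_posTrace_sub_of_le hA hC (hB.add hC)
    (le_add_of_nonneg_left hB.nonneg) hkerC
  simpa only [Pi.sub_def, ← mul_sub, sub_sub_sub_cancel_right] using hBD.sub hCD

lemma integral_posTrace_sub {A B C : Matrix ι ι 𝕜} (hA : A.PosSemidef)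
    (hB : B.PosSemidef) (hC : C.PosSemidef) (hkerB : ∀ v, B *ᵥ v = 0 → A *ᵥ v = 0)
    (hkerC : ∀ v, C *ᵥ v = 0 → A *ᵥ v = 0) :
    ∫ t in Ioi 0, t⁻¹ * (posTrace (A - t • B) - posTrace (A - t • C)) =
      RCLike.re (A * (cfc Real.log C - cfc Real.log B)).trace := by
  have hD := hB.add hC
  have hBD : B ≤ B + C := le_add_of_nonneg_right hC.nonneg
  have hCD : C ≤ B + C := le_add_of_nonneg_left hB.nonneg
  calc ∫ t in Ioi 0, t⁻¹ * (posTrace (A - t • B) - posTrace (A - t • C))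
    _ = (∫ t in Ioi 0, t⁻¹ * (posTrace (A - t • B) - posTrace (A - t • (B + C)))) -
        ∫ t in Ioi 0, t⁻¹ * (posTrace (A - t • C) - posTrace (A - t • (B + C))) := by
      rw [← integral_sub (integrableOn_posTrace_sub_of_le hA hB hD hBD hkerB)
        (integrableOn_posTrace_sub_of_le hA hC hD hCD hkerC)]
      simp only [← mul_sub, sub_sub_sub_cancel_right]
    _ = RCLike.re (A * (cfc Real.log C - cfc Real.log B)).trace := by
      rw [integral_posTrace_sub_of_le hA hB hD hBD hkerB,
        integral_posTrace_sub_of_le hA hC hD hCD hkerC, ← map_sub, ← trace_sub, ← mul_sub,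
        sub_sub_sub_cancel_left]

end Fubini

section HockeyStick

open Set

lemma image_inv_Ioi_one : Inv.inv '' Ioi (1 : ℝ) = Ioo 0 1 := by
  rw [image_inv_eq_inv, inv_Ioi₀ one_pos, inv_one]

lemma integrableOn_Ioo_zero_one_iff_comp_inv {f : ℝ → ℝ} :
    IntegrableOn f (Ioo 0 1) ↔ IntegrableOn (fun γ ↦ (γ ^ 2)⁻¹ * f γ⁻¹) (Ioi 1) := by
  rw [← image_inv_Ioi_one, integrableOn_image_iff_integrableOn_abs_deriv_smul measurableSet_Ioi
    (fun γ hγ ↦ (hasDerivAt_inv (one_pos.trans hγ).ne').hasDerivWithinAt) inv_injective.injOn]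
  simp

lemma integral_Ioo_zero_one_eq_comp_inv (f : ℝ → ℝ) :
    ∫ t in Ioo 0 1, f t = ∫ γ in Ioi 1, (γ ^ 2)⁻¹ * f γ⁻¹ := by
  rw [← image_inv_Ioi_one, integral_image_eq_integral_abs_deriv_smul measurableSet_Ioi
    (fun γ hγ ↦ (hasDerivAt_inv (one_pos.trans hγ).ne').hasDerivWithinAt) inv_injective.injOn]
  simp

lemma posTrace_sub_smul_self {A : Matrix ι ι 𝕜} (hA : A.PosSemidef) (t : ℝ) :
    posTrace (A - t • A) = max (1 - t) 0 * RCLike.re A.trace := by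
  rw [← posTrace_smul_of_posSemidef hA, sub_smul, one_smul]

lemma inv_mul_posTrace_sub_of_one_le {A : Matrix ι ι 𝕜} (hA : A.PosSemidef) (B : Matrix ι ι 𝕜)
    {t : ℝ} (ht : 1 ≤ t) :
    t⁻¹ * (posTrace (A - t • B) - posTrace (A - t • A)) = t⁻¹ * posTrace (A - t • B) := by
  rw [posTrace_sub_smul_self hA, max_eq_right (sub_nonpos.2 ht), zero_mul, sub_zero]

lemma mul_posTrace_sub_inv_smul {A B : Matrix ι ι 𝕜} (hA : A.IsHermitian) (hB : B.IsHermitian)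
    {γ : ℝ} (hγ : 0 < γ) :
    γ * posTrace (A - γ⁻¹ • B) =
      posTrace (B - γ • A) + γ * RCLike.re A.trace - RCLike.re B.trace := by
  have hscale : γ • (A - γ⁻¹ • B) = γ • A - B := by
    rw [smul_sub, smul_inv_smul₀ hγ.ne']
  rw [← posTrace_smul _ hγ.le, hscale, ← neg_sub,
    posTrace_eq_add_posTrace_neg (isHermitian_sub_smul hB hA γ).neg, neg_neg, neg_sub, trace_sub,
    trace_smul, map_sub, RCLike.smul_re, add_sub_assoc]

lemma mul_posTrace_sub_inv_smul_sub_self {A B : Matrix ι ι 𝕜} (hA : A.PosSemidef)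
    (hB : B.IsHermitian) {γ : ℝ} (hγ : 1 ≤ γ) :
    γ * (posTrace (A - γ⁻¹ • B) - posTrace (A - γ⁻¹ • A)) =
      posTrace (B - γ • A) + RCLike.re (A - B).trace := by
  have hγ₀ : 0 < γ := one_pos.trans_le hγ
  have hself : γ * posTrace (A - γ⁻¹ • A) = (γ - 1) * RCLike.re A.trace := by
    rw [posTrace_sub_smul_self hA, max_eq_left (sub_nonneg.2 (inv_le_one_of_one_le₀ hγ)),
      ← mul_assoc, mul_sub, mul_one, mul_inv_cancel₀ hγ₀.ne']
  rw [mul_sub, mul_posTrace_sub_inv_smul hA.1 hB hγ₀, hself, trace_sub, map_sub]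
  ring

lemma integrableOn_posTrace_sub_self {A B : Matrix ι ι 𝕜} (hA : A.PosSemidef)
    (hB : B.PosSemidef) (hker : ∀ v, B *ᵥ v = 0 → A *ᵥ v = 0) :
    IntegrableOn (fun t ↦ t⁻¹ * (posTrace (A - t • B) - posTrace (A - t • A))) (Ioi 0) :=
  integrableOn_posTrace_sub hA hB hA hker fun _ hv ↦ hv

lemma integrableOn_inv_mul_posTrace_sub_smul {A B : Matrix ι ι 𝕜} (hA : A.PosSemidef)
    (hB : B.PosSemidef) (hker : ∀ v, B *ᵥ v = 0 → A *ᵥ v = 0) :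
    IntegrableOn (fun γ ↦ γ⁻¹ * posTrace (A - γ • B)) (Ioi 1) :=
  IntegrableOn.congr_fun
    ((integrableOn_posTrace_sub_self hA hB hker).mono_set (Ioi_subset_Ioi zero_le_one))
    (fun _ hγ ↦ inv_mul_posTrace_sub_of_one_le hA B (le_of_lt hγ)) measurableSet_Ioi

lemma integrableOn_inv_sq_mul_posTrace_sub_smul {A B : Matrix ι ι 𝕜} (hA : A.PosSemidef)
    (hB : B.PosSemidef) (hker : ∀ v, B *ᵥ v = 0 → A *ᵥ v = 0) :
    IntegrableOn (fun γ ↦ (γ ^ 2)⁻¹ * posTrace (B - γ • A)) (Ioi 1) := by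
  have hgap := (integrableOn_posTrace_sub_self hA hB hker).mono_set
    (Ioo_subset_Ioi_self : Ioo (0 : ℝ) 1 ⊆ Ioi 0)
  have hconst : IntegrableOn (fun _ ↦ RCLike.re (A - B).trace) (Ioo (0 : ℝ) 1) :=
    integrableOn_const (by simp)
  refine (integrableOn_Ioo_zero_one_iff_comp_inv.1 (hgap.sub hconst)).congr_fun
    (fun γ hγ ↦ ?_) measurableSet_Ioi
  simp only [Pi.sub_apply, inv_inv]
  rw [mul_posTrace_sub_inv_smul_sub_self hA hB.1 (le_of_lt hγ), add_sub_cancel_right]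

lemma integral_Ioo_posTrace_sub {A B : Matrix ι ι 𝕜} (hA : A.PosSemidef)
    (hB : B.PosSemidef) (hker : ∀ v, B *ᵥ v = 0 → A *ᵥ v = 0) :
    ∫ t in Ioo 0 1, t⁻¹ * (posTrace (A - t • B) - posTrace (A - t • A)) =
      (∫ γ in Ioi 1, (γ ^ 2)⁻¹ * posTrace (B - γ • A)) + RCLike.re (A - B).trace := by
  have hgap := (integrableOn_posTrace_sub_self hA hB hker).mono_set
    (Ioo_subset_Ioi_self : Ioo (0 : ℝ) 1 ⊆ Ioi 0)
  have hconst : IntegrableOn (fun _ ↦ RCLike.re (A - B).trace) (Ioo (0 : ℝ) 1) :=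
    integrableOn_const (by simp)
  rw [← sub_eq_iff_eq_add]
  calc (∫ t in Ioo 0 1, t⁻¹ * (posTrace (A - t • B) - posTrace (A - t • A))) -
        RCLike.re (A - B).trace
    _ = ∫ t in Ioo 0 1, (t⁻¹ * (posTrace (A - t • B) - posTrace (A - t • A)) -
          RCLike.re (A - B).trace) := by
      rw [integral_sub hgap hconst]
      simp
    _ = ∫ γ in Ioi 1, (γ ^ 2)⁻¹ * (γ * (posTrace (A - γ⁻¹ • B) - posTrace (A - γ⁻¹ • A)) -
          RCLike.re (A - B).trace) := by
      rw [integral_Ioo_zero_one_eq_comp_inv]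
      simp only [inv_inv]
    _ = ∫ γ in Ioi 1, (γ ^ 2)⁻¹ * posTrace (B - γ • A) := by
      refine setIntegral_congr_fun measurableSet_Ioi fun γ hγ ↦ ?_
      simp only [mul_posTrace_sub_inv_smul_sub_self hA hB.1 (le_of_lt hγ), add_sub_cancel_right]

theorem relativeEntropy_eq_integral_hockeyStick_general {A B : Matrix ι ι 𝕜} (hA : A.PosSemidef)
    (hB : B.PosSemidef) (hker : ∀ v, B *ᵥ v = 0 → A *ᵥ v = 0) :
    RCLike.re (A * (cfc Real.log A - cfc Real.log B)).trace =
      (∫ γ in Ioi 1, (γ⁻¹ * posTrace (A - γ • B) + (γ ^ 2)⁻¹ * posTrace (B - γ • A))) +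
        RCLike.re (A - B).trace := by
  have hgap := integrableOn_posTrace_sub_self hA hB hker
  calc RCLike.re (A * (cfc Real.log A - cfc Real.log B)).trace
    _ = ∫ t in Ioi 0, t⁻¹ * (posTrace (A - t • B) - posTrace (A - t • A)) :=
      (integral_posTrace_sub hA hB hA hker fun _ hv ↦ hv).symm
    _ = (∫ t in Ioo 0 1, t⁻¹ * (posTrace (A - t • B) - posTrace (A - t • A))) +
        ∫ t in Ioi 1, t⁻¹ * (posTrace (A - t • B) - posTrace (A - t • A)) := by
      rw [← Ioc_union_Ioi_eq_Ioi zero_le_one, setIntegral_union Ioc_disjoint_Ioi_same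
        measurableSet_Ioi (hgap.mono_set Ioc_subset_Ioi_self)
        (hgap.mono_set (Ioi_subset_Ioi zero_le_one)), integral_Ioc_eq_integral_Ioo]
    _ = (∫ γ in Ioi 1, (γ ^ 2)⁻¹ * posTrace (B - γ • A)) + RCLike.re (A - B).trace +
        ∫ γ in Ioi 1, γ⁻¹ * posTrace (A - γ • B) := by
      rw [integral_Ioo_posTrace_sub hA hB hker]
      exact congrArg _ <| setIntegral_congr_fun measurableSet_Ioi fun γ hγ ↦
        inv_mul_posTrace_sub_of_one_le hA B (le_of_lt hγ)
    _ = (∫ γ in Ioi 1, (γ⁻¹ * posTrace (A - γ • B) + (γ ^ 2)⁻¹ * posTrace (B - γ • A))) +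
        RCLike.re (A - B).trace := by
      rw [integral_add (integrableOn_inv_mul_posTrace_sub_smul hA hB hker)
        (integrableOn_inv_sq_mul_posTrace_sub_smul hA hB hker)]
      ring

end HockeyStick

end

/-- Frenkel's integral formula in hockey-stick form:
`Tr[A(log A - log B)] = ∫₁^∞ ((1/γ)Tr[(A-γB)₊] + (1/γ²)Tr[(B-γA)₊]) dγ + Tr[A - B]`. -/
theorem relativeEntropy_eq_integral_hockeyStick {n : ℕ} (A B : Matrix (Fin n) (Fin n) ℂ)
    (hA : A.PosDef) (hB : B.PosDef) :
    (Matrix.trace (A * (mlog A - mlog B))).re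
      = (∫ γ in Set.Ioi (1:ℝ),
          (γ⁻¹ * (Matrix.trace (mposPart (A - γ • B))).re
            + (γ^2)⁻¹ * (Matrix.trace (mposPart (B - γ • A))).re))
        + (Matrix.trace (A - B)).re := by
  have hker (v : Fin n → ℂ) (hv : B *ᵥ v = 0) : A *ᵥ v = 0 := by
    rw [mulVec_injective_of_isUnit hB.isUnit (hv.trans (mulVec_zero B).symm), mulVec_zero]
  simpa only [posTrace, posPart_eq_cfc_max, mposPart, mlog, RCLike.re_eq_complex_re] using
    relativeEntropy_eq_integral_hockeyStick_general hA.posSemidef hB.posSemidef hker
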